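/- Let F be a field of positive characteristic p with algebraic closure F̄, and let F^{1/p} = F({c^{1/p} : c ∈ F}) be the subfield of F̄ obtained by adjoining all p-th roots of elements of F. For f ∈ F[x₁,…,x_d] the following are equivalent: (1) f is square-free as an element of F̄[x₁,…,x_d]; (2) f is square-free as an element of F^{1/p}[x₁,…,x_d]; (3) f is square-free as an element of F[x₁,…,x_d] and f has no irreducible factor g ∈ F[x₁,…,x_d] lying in F[x₁^p,…,x_d^p]. -/

import Mathlib

/-!
Squarefreeness over `F` passes to an extension field `L` as soon as no irreducible factor `g` has
all its partial derivatives equal to zero. Indeed, if `∂ⱼg ≠ 0`, then `g` is coprime to `∂ⱼg`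
because `∂ⱼg` has smaller degree; coprimality survives the flat base change to `L`, so `g` has no
square factor there. Non-associated irreducible factors stay coprime for the same reason. The
polynomials with zero partial derivatives are exactly those in the `p`-th powers of the variables,
and each of them becomes a `p`-th power as soon as `L` contains the `p`-th roots of its
coefficients, which `F^{1/p}` and `F̄` both do.
-/

/-- The subfield `F^{1/p}` of the algebraic closure `F̄` obtained by adjoining to `F` the
`p`-th roots of all elements of `F` (here realized as the subfield generated by all elements
whose `p`-th power lies in the image of `F`). -/
noncomputable def pthRootClosure (F : Type*) [Field F] (p : ℕ) :
    Subfield (AlgebraicClosure F) :=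
  Subfield.closure
    {x : AlgebraicClosure F | x ^ p ∈ Set.range (algebraMap F (AlgebraicClosure F))}

/-- The natural embedding `F →+* F^{1/p}`. -/
noncomputable def toPthRootClosure (F : Type*) [Field F] (p : ℕ) :
    F →+* pthRootClosure F p :=
  RingHom.codRestrict (algebraMap F (AlgebraicClosure F)) (pthRootClosure F p)
    (fun x => Subfield.subset_closure ⟨x ^ p, (map_pow (algebraMap F (AlgebraicClosure F)) x p)⟩)

section Flat

variable {A : Type*} [CommRing A] [DecompositionMonoid A]

lemma exists_eq_smul_of_isRelPrime_of_smul_eq_smul {M : Type*} [AddCommGroup M] [Module A M]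
    [Module.Flat A M] {a b : A} (hab : IsRelPrime a b) {u v : M} (h : a • u = b • v) :
    ∃ w, u = b • w := by
  have hrel : ∑ i, ![a, -b] i • ![u, v] i = 0 := by simp [h]
  obtain ⟨k, c, y, hx, hc⟩ := Module.Flat.isTrivialRelation_of_sum_smul_eq_zero hrel
  have hdvd : ∀ j, b ∣ c 0 j := fun j => by
    have hj : a * c 0 j + -b * c 1 j = 0 := by simpa using hc j
    exact hab.symm.dvd_of_dvd_mul_left ⟨c 1 j, by linear_combination hj⟩
  choose d hd using hdvd
  have hu : u = ∑ j, c 0 j • y j := hx 0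
  exact ⟨∑ j, d j • y j, by simp only [hu, hd, mul_smul, Finset.smul_sum]⟩

lemma isRelPrime_algebraMap_of_flat {B : Type*} [IsDomain A] [CommRing B] [Algebra A B]
    [Module.Flat A B] {a b : A} (hab : IsRelPrime a b) :
    IsRelPrime (algebraMap A B a) (algebraMap A B b) := by
  obtain rfl | hb := eq_or_ne b 0
  · exact ((isRelPrime_zero_right.mp hab).map (algebraMap A B)).isRelPrime_left
  rintro s ⟨a', ha⟩ ⟨b', hb'⟩
  have hcross : a • b' = b • a' := by
    rw [Algebra.smul_def, Algebra.smul_def, ha, hb']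
    ring
  obtain ⟨w, rfl⟩ := exists_eq_smul_of_isRelPrime_of_smul_eq_smul hab hcross
  have hsw : b • (s * w) = b • (1 : B) := by
    rw [← mul_smul_comm, ← hb', Algebra.algebraMap_eq_smul_one]
  exact IsUnit.of_mul_eq_one w (smul_right_injective B hb hsw)

end Flat

lemma squarefree_of_isRelPrime_derivation {R A : Type*} [CommSemiring R] [CommSemiring A]
    [Algebra R A] (D : Derivation R A A) {a : A} (h : IsRelPrime a (D a)) : Squarefree a := by
  rintro s ⟨q, rfl⟩
  refine h ((dvd_mul_right s s).mul_right q) ?_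
  simp only [Derivation.leibniz, smul_eq_mul]
  exact ⟨s * D q + q * (D s + D s), by ring⟩

lemma squarefree_of_squarefree_map {M N G : Type*} [Monoid M] [Monoid N] [FunLike G M N]
    [MonoidHomClass G M N] (φ : G) [IsLocalHom φ] {a : M} (h : Squarefree (φ a)) :
    Squarefree a := fun s hs =>
  IsUnit.of_map φ s (h (φ s) (map_mul φ s s ▸ map_dvd φ hs))

section Squarefree

open MvPolynomial

variable {σ : Type*}

section PDeriv

lemma totalDegree_pderiv_lt {R : Type*} [CommSemiring R] {g : MvPolynomial σ R} {j : σ}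
    (h : pderiv j g ≠ 0) : (pderiv j g).totalDegree < g.totalDegree := by
  obtain ⟨m, hm, hdeg⟩ := Finset.exists_mem_eq_sup (pderiv j g).support
    (support_nonempty.mpr h) (fun m => m.sum fun _ e => e)
  have hm' : m + Finsupp.single j 1 ∈ g.support := by
    rw [mem_support_iff, coeff_pderiv] at hm
    exact mem_support_iff.mpr (left_ne_zero_of_mul hm)
  calc (pderiv j g).totalDegree = m.degree := hdeg
    _ < (m + Finsupp.single j 1).degree := by simp
    _ ≤ g.totalDegree := le_totalDegree hm'

lemma not_dvd_pderiv {R : Type*} [CommRing R] [IsDomain R] {g : MvPolynomial σ R} {j : σ}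
    (h : pderiv j g ≠ 0) : ¬ g ∣ pderiv j g := fun hdvd =>
  (totalDegree_pderiv_lt h).not_ge (totalDegree_le_of_dvd_of_isDomain hdvd h)

lemma dvd_of_mem_support_of_pderiv_eq_zero {R : Type*} [CommSemiring R] [NoZeroDivisors R]
    (p : ℕ) [CharP R p] {g : MvPolynomial σ R} {i : σ} (h : pderiv i g = 0) {m : σ →₀ ℕ}
    (hm : m ∈ g.support) : p ∣ m i := by
  obtain h0 | hpos := (m i).eq_zero_or_pos
  · exact h0 ▸ dvd_zero p
  have hle : Finsupp.single i 1 ≤ m := Finsupp.single_le_iff.mpr hpos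
  obtain ⟨n, rfl⟩ := exists_add_of_le hle
  rw [add_comm] at hm ⊢
  have hcoeff : coeff (n + Finsupp.single i 1) g * (n i + 1 : R) = 0 := by
    rw [← coeff_pderiv, h, coeff_zero]
  have hcast : ((n i + 1 : ℕ) : R) = 0 := by
    rw [Nat.cast_succ]
    exact (mul_eq_zero.mp hcoeff).resolve_left (mem_support_iff.mp hm)
  simpa using (CharP.cast_eq_zero_iff R p (n i + 1)).mp hcast

lemma exists_expand_eq_of_forall_dvd {R : Type*} [CommSemiring R] (p : ℕ)
    {g : MvPolynomial σ R} (h : ∀ m ∈ g.support, ∀ i, p ∣ m i) : ∃ g', expand p g' = g := by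
  refine ⟨∑ m ∈ g.support, monomial (m.mapRange (· / p) (Nat.zero_div p)) (coeff m g), ?_⟩
  conv_rhs => rw [g.as_sum]
  rw [map_sum]
  refine Finset.sum_congr rfl fun m hm => ?_
  have hdiv : p • m.mapRange (· / p) (Nat.zero_div p) = m :=
    Finsupp.ext fun i => Nat.mul_div_cancel' (h m hm i)
  rw [expand_monomial, hdiv]

lemma exists_pderiv_ne_zero {R : Type*} [CommSemiring R] [NoZeroDivisors R] (p : ℕ) [CharP R p]
    {g : MvPolynomial σ R} (h : ¬ ∃ g', expand p g' = g) : ∃ j, pderiv j g ≠ 0 := by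
  contrapose! h
  exact exists_expand_eq_of_forall_dvd p fun _ hm i =>
    dvd_of_mem_support_of_pderiv_eq_zero p (h i) hm

end PDeriv

section BaseChange

variable {R S : Type*} [CommRing R] [IsDomain R] [UniqueFactorizationMonoid R]
  [CommRing S] [Algebra R S] [Module.Flat R S]

attribute [local instance] MvPolynomial.algebraMvPolynomial in
lemma isRelPrime_map_of_flat {a b : MvPolynomial σ R} (hab : IsRelPrime a b) :
    IsRelPrime (map (algebraMap R S) a) (map (algebraMap R S) b) := by
  have : Module.Flat (MvPolynomial σ R) (MvPolynomial σ S) :=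
    Module.Flat.isBaseChange R (MvPolynomial σ R) S (MvPolynomial σ S) Algebra.IsPushout.out
  exact isRelPrime_algebraMap_of_flat hab

lemma squarefree_map_of_irreducible (p : ℕ) [CharP R p] {g : MvPolynomial σ R}
    (hg : Irreducible g) (hgp : ¬ ∃ g', expand p g' = g) :
    Squarefree (map (algebraMap R S) g) := by
  obtain ⟨j, hj⟩ := exists_pderiv_ne_zero p hgp
  have hrel : IsRelPrime g (pderiv j g) := hg.isRelPrime_iff_not_dvd.mpr (not_dvd_pderiv hj)
  refine squarefree_of_isRelPrime_derivation (pderiv j) ?_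
  rw [pderiv_map]
  exact isRelPrime_map_of_flat hrel

lemma squarefree_map_of_squarefree [IsDomain S] [UniqueFactorizationMonoid S] (p : ℕ)
    [CharP R p] {f : MvPolynomial σ R} (hf : Squarefree f)
    (hfp : ¬ ∃ g, Irreducible g ∧ g ∣ f ∧ ∃ g', expand p g' = g) :
    Squarefree (map (algebraMap R S) f) := by
  induction f using UniqueFactorizationMonoid.induction_on_prime with
  | h₁ => exact absurd hf not_squarefree_zero
  | h₂ u hu => exact (hu.map (map (algebraMap R S))).squarefree
  | h₃ f g _ hg ih =>
    obtain ⟨hgf, -, hf⟩ := squarefree_mul_iff.mp hf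
    rw [map_mul, squarefree_mul_iff]
    refine ⟨isRelPrime_map_of_flat hgf, ?_, ih hf ?_⟩
    · exact squarefree_map_of_irreducible p hg.irreducible fun hgp =>
        hfp ⟨g, hg.irreducible, dvd_mul_right g f, hgp⟩
    · rintro ⟨g', hg', hdvd, hexp⟩
      exact hfp ⟨g', hg', hdvd.mul_left g, hexp⟩

end BaseChange

section PthRoots

lemma isLocalHom_mvPolynomial_map {R S : Type*} [CommRing R] [CommRing S] {φ : R →+* S}
    [IsLocalHom φ] (hφ : Function.Injective φ) :
    IsLocalHom (map φ : MvPolynomial σ R →+* MvPolynomial σ S) where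
  map_nonunit g hg := by
    simpa only [MvPolynomial.isUnit_iff, coeff_map, isUnit_map_iff,
      IsNilpotent.map_iff hφ] using hg

lemma exists_pow_eq_map_expand {R S : Type*} [CommSemiring R] [CommSemiring S] (φ : R →+* S)
    (p : ℕ) [ExpChar S p] (hφ : ∀ a, ∃ b, b ^ p = φ a) (g : MvPolynomial σ R) :
    ∃ h, h ^ p = map φ (expand p g) := by
  have hmem : map φ g ∈ Set.range (map (frobenius S p)) := by
    rw [mem_range_map_iff_coeffs_subset]
    intro c hc
    obtain ⟨m, -, rfl⟩ := mem_coeffs_iff.mp hc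
    rw [coeff_map]
    exact hφ (coeff m g)
  obtain ⟨h, hh⟩ := hmem
  exact ⟨h, by rw [map_expand, ← hh, ← map_expand, map_frobenius_expand]⟩

variable {K L : Type*} [Field K] [Field L] (φ : K →+* L) (p : ℕ) [CharP K p]

lemma isUnit_expand_of_dvd_of_squarefree_map (hφ : p ≠ 0 → ∀ a, ∃ b, b ^ p = φ a)
    {f g : MvPolynomial σ K} (hf : Squarefree (map φ f)) (hdvd : expand p g ∣ f) :
    IsUnit (expand p g) := by
  have hloc : IsLocalHom (map φ : MvPolynomial σ K →+* MvPolynomial σ L) :=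
    isLocalHom_mvPolynomial_map φ.injective
  obtain rfl | hp := eq_or_ne p 0
  · have hne : expand 0 g ≠ 0 :=
      ne_zero_of_dvd_ne_zero (squarefree_of_squarefree_map (map φ) hf).ne_zero hdvd
    rw [expand_zero_apply] at hne ⊢
    exact (Ne.isUnit (C_ne_zero.mp hne)).map C
  have hprime : p.Prime := (CharP.char_is_prime_or_zero K p).resolve_right hp
  have : ExpChar K p := .prime hprime
  have : ExpChar L p := expChar_of_injective_ringHom φ.injective p
  obtain ⟨h, hh⟩ := exists_pow_eq_map_expand φ p (hφ hp) g
  have hsq : h * h ∣ map φ f :=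
    calc h * h = h ^ 2 := (sq h).symm
      _ ∣ h ^ p := pow_dvd_pow h hprime.two_le
      _ = map φ (expand p g) := hh
      _ ∣ map φ f := map_dvd (map φ) hdvd
  exact IsUnit.of_map (map φ) _ (hh ▸ (hf h hsq).pow p)

theorem squarefree_map_iff (hφ : p ≠ 0 → ∀ a, ∃ b, b ^ p = φ a) (f : MvPolynomial σ K) :
    Squarefree (map φ f) ↔
      Squarefree f ∧ ¬ ∃ g, Irreducible g ∧ g ∣ f ∧ ∃ g', expand p g' = g := by
  constructor
  · intro hf
    have := isLocalHom_mvPolynomial_map (σ := σ) φ.injective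
    refine ⟨squarefree_of_squarefree_map (map φ) hf, ?_⟩
    rintro ⟨_, hg, hdvd, g', rfl⟩
    exact hg.not_isUnit (isUnit_expand_of_dvd_of_squarefree_map φ p hφ hf hdvd)
  · rintro ⟨hf, hfp⟩
    algebraize [φ]
    exact squarefree_map_of_squarefree p hf hfp

end PthRoots

lemma exists_pow_eq_toPthRootClosure (F : Type*) [Field F] {p : ℕ} (hp : p ≠ 0) (a : F) :
    ∃ b, b ^ p = toPthRootClosure F p a := by
  obtain ⟨x, hx⟩ := IsAlgClosed.exists_pow_nat_eq
    (algebraMap F (AlgebraicClosure F) a) (Nat.pos_of_ne_zero hp)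
  exact ⟨⟨x, Subfield.subset_closure ⟨a, hx.symm⟩⟩, Subtype.ext hx⟩

-- For `p = 0` the convention `x ^ 0 = 1` makes `pthRootClosure F p` all of `F̄`, and the range of
-- `expand p` consists of the constants.
theorem squarefree_absolute_tfae_general (F : Type*) [Field F] (p : ℕ) [CharP F p]
    (f : MvPolynomial σ F) :
    List.TFAE
      [ Squarefree (map (algebraMap F (AlgebraicClosure F)) f),
        Squarefree (map (toPthRootClosure F p) f),
        Squarefree f ∧ ¬ ∃ g, Irreducible g ∧ g ∣ f ∧ ∃ g', expand p g' = g ] := by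
  tfae_have 1 ↔ 3 := squarefree_map_iff _ p
    (fun hp _ => IsAlgClosed.exists_pow_nat_eq _ (Nat.pos_of_ne_zero hp)) f
  tfae_have 2 ↔ 3 := squarefree_map_iff _ p (fun hp => exists_pow_eq_toPthRootClosure F hp) f
  tfae_finish

end Squarefree

/-- Let `F` be a field of characteristic `p > 0` with algebraic closure `F̄`.
For `f ∈ F[x₁,…,x_d]` the following are equivalent: (1) `f` is square-free in `F̄[x₁,…,x_d]`;
(2) `f` is square-free in `F^{1/p}[x₁,…,x_d]`; (3) `f` is square-free in `F[x₁,…,x_d]` and has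
no irreducible factor lying in `F[x₁^p,…,x_d^p]`. -/
theorem squarefree_absolute_tfae (F : Type*) [Field F] (p : ℕ) [CharP F p] (hp : 0 < p)
    (d : ℕ) (f : MvPolynomial (Fin d) F) :
    List.TFAE
      [ Squarefree (MvPolynomial.map (algebraMap F (AlgebraicClosure F)) f),
        Squarefree (MvPolynomial.map (toPthRootClosure F p) f),
        Squarefree f ∧
          ¬ ∃ g : MvPolynomial (Fin d) F,
              Irreducible g ∧ g ∣ f ∧ ∃ g', MvPolynomial.expand p g' = g ] :=
  squarefree_absolute_tfae_general F p f
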